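/- arXiv:2404.09652 — 3 statements merged into one kernel-verified Lean document; each statement's English description precedes it below -/
import Mathlib

section
/- Soundness of the monotonicity inference system, positive case: if the judgment {sys} ⊢ φ : ⊕ is derivable for a closed formula φ of the extended logic (with the fix construct), then φ is ⊕-monotone. -/
/-!
Every formula derivable with polarity `⊕` is monotone, and every formula derivable with polarity
`⊖` antitone, jointly in the model `𝕋` and in the whole set assignment `Δ`; the context `Γ` plays
no role in this. The invariant carried through the induction is: `T ⊆ T'`, `Δ ≤ Δ'` pointwise,
`Δ` takes values below `T`, `Δ'` takes values below `T'`, and the free trace variables are assigned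
traces of `T` (this last part is where closedness is needed).

* First-order quantifiers: the rules admit `∃` only for `⊕` and `∀` only for `⊖`.
* Second-order quantifiers: a subset of `T` is a subset of `T'`, and a subset `A'` of `T'` is
  matched with `A' ∩ T ⊆ A'`.
* `fix` : the solution set grows with `T` and `Δ` (`solSet_mono`), because the trace of a solution
  for `(T', Δ')` on `T` is a solution for `(T, Δ)` (`satBinders_inter`). The solution set stays
  inside `T` (`solSet_subset`) because `T` satisfies all constraints; this needs every target
  trace to lie in `T`, as otherwise there may be no solution and the intersection defining `solSet`
  is the set of all traces.
-/

namespace Hyper2LTLf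

/-- A finite trace of length `m` over atomic propositions `AP`. -/
abbrev Trace (AP : Type) (m : ℕ) : Type := Fin m → Set AP

/-- Quantifier-free formulas (used as step formulas of fixpoint constraints). -/
inductive QF (AP : Type) : Type
  | atom : AP → ℕ → QF AP
  | neg  : QF AP → QF AP
  | conj : QF AP → QF AP → QF AP
  | nxt  : QF AP → QF AP
  | prv  : QF AP → QF AP
  | untl : QF AP → QF AP → QF AP
  | snce : QF AP → QF AP → QF AP

/-- The distinguished second-order variable `sys`. -/
def sysVar : ℕ := 0

variable {AP : Type}

/-- Finite-trace satisfaction of quantifier-free formulas. -/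
def SatQF {m : ℕ} : (ℕ → Trace AP m) → ℕ → QF AP → Prop
  | P, i, .atom a v => ∃ h : i < m, a ∈ P v ⟨i, h⟩
  | P, i, .neg φ => ¬ SatQF P i φ
  | P, i, .conj φ ψ => SatQF P i φ ∧ SatQF P i ψ
  | P, i, .nxt φ => i + 1 < m ∧ SatQF P (i + 1) φ
  | P, i, .prv φ => 0 < i ∧ SatQF P (i - 1) φ
  | P, i, .untl φ ψ =>
      ∃ j, i ≤ j ∧ j < m ∧ SatQF P j ψ ∧ ∀ k, i ≤ k → k < j → SatQF P k φ
  | P, i, .snce φ ψ =>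
      ∃ j, j ≤ i ∧ SatQF P j ψ ∧ ∀ k, j < k → k ≤ i → SatQF P k φ

/-- A fixpoint constraint `∀π₁∈X₁ … ∀πₙ∈Xₙ. φ_step → π ∈ X` for the set
variable `X` of the enclosing `fix`: `binders` is the list `(π₁,X₁),…,(πₙ,Xₙ)`,
`step` is the quantifier-free formula `φ_step`, and `target` is `π`. -/
structure Constraint (AP : Type) : Type where
  binders : List (ℕ × ℕ)
  step : QF AP
  target : ℕ

/-- Satisfaction of the universally quantified implication of a constraint, where
`X` is the set variable of the enclosing `fix` (the conclusion is `P π ∈ D X`). -/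
def SatBinders {m : ℕ} (D : ℕ → Set (Trace AP m)) (i : ℕ) (X : ℕ) :
    (ℕ → Trace AP m) → List (ℕ × ℕ) → QF AP → ℕ → Prop
  | P, [], step, tgt => SatQF P i step → P tgt ∈ D X
  | P, (v, Y) :: rest, step, tgt =>
      ∀ t ∈ D Y, SatBinders D i X (Function.update P v t) rest step tgt

/-- `Π, Δ, i ⊨_𝕋 ξ` for a fixpoint constraint `ξ` of the fix-variable `X`. -/
def SatConstraint {m : ℕ} (D : ℕ → Set (Trace AP m)) (i : ℕ) (X : ℕ)
    (P : ℕ → Trace AP m) (c : Constraint AP) : Prop :=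
  SatBinders D i X P c.binders c.step c.target

/-- `sol(Π,Δ,i,X,ξ₁,…,ξ_k)`: the ⊆-least subset `A` of `𝕋` with
`Π, Δ[X↦A], i ⊨_𝕋 ξ_j` for every `j`, as the intersection of all such subsets. -/
def solSet {m : ℕ} (T : Set (Trace AP m)) (P : ℕ → Trace AP m)
    (D : ℕ → Set (Trace AP m)) (i : ℕ) (X : ℕ) (cs : List (Constraint AP)) :
    Set (Trace AP m) :=
  ⋂₀ {A : Set (Trace AP m) | A ⊆ T ∧
        ∀ c ∈ cs, SatConstraint (Function.update D X A) i X P c}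

/-- Syntax of the extended logic Hyper²LTL_f with the `fix` construct. -/
inductive FormulaX (AP : Type) : Type
  | atom  : AP → ℕ → FormulaX AP
  | neg   : FormulaX AP → FormulaX AP
  | conj  : FormulaX AP → FormulaX AP → FormulaX AP
  | nxt   : FormulaX AP → FormulaX AP
  | prv   : FormulaX AP → FormulaX AP
  | untl  : FormulaX AP → FormulaX AP → FormulaX AP
  | snce  : FormulaX AP → FormulaX AP → FormulaX AP
  | exFO  : ℕ → ℕ → FormulaX AP → FormulaX AP   -- ∃ π ∈ X. φ
  | allFO : ℕ → ℕ → FormulaX AP → FormulaX AP   -- ∀ π ∈ X. φ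
  | exSO  : ℕ → FormulaX AP → FormulaX AP        -- ∃ X. φ
  | allSO : ℕ → FormulaX AP → FormulaX AP        -- ∀ X. φ
  | fix   : ℕ → List (Constraint AP) → FormulaX AP → FormulaX AP
      -- fix(X, ξ₁, …, ξ_k). φ

/-- Finite-trace satisfaction `Π, Δ, i ⊨_𝕋 φ` for the extended logic. -/
def SatX {m : ℕ} (T : Set (Trace AP m)) :
    (ℕ → Trace AP m) → (ℕ → Set (Trace AP m)) → ℕ → FormulaX AP → Prop
  | P, _, i, .atom a v => ∃ h : i < m, a ∈ P v ⟨i, h⟩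
  | P, D, i, .neg φ => ¬ SatX T P D i φ
  | P, D, i, .conj φ ψ => SatX T P D i φ ∧ SatX T P D i ψ
  | P, D, i, .nxt φ => i + 1 < m ∧ SatX T P D (i + 1) φ
  | P, D, i, .prv φ => 0 < i ∧ SatX T P D (i - 1) φ
  | P, D, i, .untl φ ψ =>
      ∃ j, i ≤ j ∧ j < m ∧ SatX T P D j ψ ∧ ∀ k, i ≤ k → k < j → SatX T P D k φ
  | P, D, i, .snce φ ψ =>
      ∃ j, j ≤ i ∧ SatX T P D j ψ ∧ ∀ k, j < k → k ≤ i → SatX T P D k φ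
  | P, D, i, .exFO v X φ => ∃ t ∈ D X, SatX T (Function.update P v t) D i φ
  | P, D, i, .allFO v X φ => ∀ t ∈ D X, SatX T (Function.update P v t) D i φ
  | P, D, i, .exSO X φ =>
      ∃ A : Set (Trace AP m), A ⊆ T ∧ SatX T P (Function.update D X A) i φ
  | P, D, i, .allSO X φ =>
      ∀ A : Set (Trace AP m), A ⊆ T → SatX T P (Function.update D X A) i φ
  | P, D, i, .fix X cs φ =>
      SatX T P (Function.update D X (solSet T P D i X cs)) i φ

/-- Top-level satisfaction: `𝕋 ⊨ φ` iff `∅, [sys ↦ 𝕋], 0 ⊨_𝕋 φ`. -/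
def ModelsX {m : ℕ} (T : Set (Trace AP m)) (φ : FormulaX AP) : Prop :=
  SatX T (fun _ _ => (∅ : Set AP)) (fun X => if X = sysVar then T else ∅) 0 φ

/-- Trace variables occurring in a quantifier-free formula. -/
def qfTV : QF AP → Set ℕ
  | .atom _ v => {v}
  | .neg φ => qfTV φ
  | .nxt φ => qfTV φ
  | .prv φ => qfTV φ
  | .conj φ ψ => qfTV φ ∪ qfTV ψ
  | .untl φ ψ => qfTV φ ∪ qfTV ψ
  | .snce φ ψ => qfTV φ ∪ qfTV ψ

/-- Free trace variables of a fixpoint constraint. -/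
def freeTVC (c : Constraint AP) : Set ℕ :=
  (qfTV c.step ∪ {c.target}) \ {v | ∃ p ∈ c.binders, p.1 = v}

/-- Set variables occurring in a fixpoint constraint (its binders). -/
def svC (c : Constraint AP) : Set ℕ := {Y | ∃ p ∈ c.binders, p.2 = Y}

/-- Free trace variables. -/
def freeTVX : FormulaX AP → Set ℕ
  | .atom _ v => {v}
  | .neg φ => freeTVX φ
  | .nxt φ => freeTVX φ
  | .prv φ => freeTVX φ
  | .conj φ ψ => freeTVX φ ∪ freeTVX ψ
  | .untl φ ψ => freeTVX φ ∪ freeTVX ψ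
  | .snce φ ψ => freeTVX φ ∪ freeTVX ψ
  | .exFO v _ φ => freeTVX φ \ {v}
  | .allFO v _ φ => freeTVX φ \ {v}
  | .exSO _ φ => freeTVX φ
  | .allSO _ φ => freeTVX φ
  | .fix _ cs φ => freeTVX φ ∪ {v | ∃ c ∈ cs, v ∈ freeTVC c}

/-- Free set variables. -/
def freeSVX : FormulaX AP → Set ℕ
  | .atom _ _ => ∅
  | .neg φ => freeSVX φ
  | .nxt φ => freeSVX φ
  | .prv φ => freeSVX φ
  | .conj φ ψ => freeSVX φ ∪ freeSVX ψ
  | .untl φ ψ => freeSVX φ ∪ freeSVX ψ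
  | .snce φ ψ => freeSVX φ ∪ freeSVX ψ
  | .exFO _ X φ => insert X (freeSVX φ)
  | .allFO _ X φ => insert X (freeSVX φ)
  | .exSO X φ => freeSVX φ \ {X}
  | .allSO X φ => freeSVX φ \ {X}
  | .fix X cs φ => (freeSVX φ ∪ {Y | ∃ c ∈ cs, Y ∈ svC c}) \ {X}

/-- A formula is closed if it has no free trace variables and its only
(possibly) free set variable is `sys`. -/
def ClosedX (φ : FormulaX AP) : Prop := freeTVX φ = ∅ ∧ freeSVX φ ⊆ {sysVar}

/-- `⊕`-monotonicity. -/
def PlusMonotoneX (φ : FormulaX AP) : Prop :=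
  ∀ (m : ℕ) (T T' : Set (Trace AP m)), T ⊆ T' → ModelsX T φ → ModelsX T' φ

/-- `⊖`-monotonicity. -/
def MinusMonotoneX (φ : FormulaX AP) : Prop :=
  ∀ (m : ℕ) (T T' : Set (Trace AP m)), T ⊆ T' → ¬ ModelsX T φ → ¬ ModelsX T' φ

/-- The monotonicity inference system. `Judg Γ φ α` formalizes `Γ ⊢ φ : α`,
where `α = true` stands for `⊕` and `α = false` stands for `⊖`. -/
inductive Judg {AP : Type} : Set ℕ → FormulaX AP → Bool → Prop
  | atom {Γ : Set ℕ} (a : AP) (v : ℕ) (α : Bool) : Judg Γ (.atom a v) α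
  | negPlus {Γ : Set ℕ} {φ : FormulaX AP} :
      Judg Γ φ true → Judg Γ (.neg φ) false
  | negMinus {Γ : Set ℕ} {φ : FormulaX AP} :
      Judg Γ φ false → Judg Γ (.neg φ) true
  | nxt {Γ : Set ℕ} {φ : FormulaX AP} {α : Bool} :
      Judg Γ φ α → Judg Γ (.nxt φ) α
  | prv {Γ : Set ℕ} {φ : FormulaX AP} {α : Bool} :
      Judg Γ φ α → Judg Γ (.prv φ) α
  | conj {Γ : Set ℕ} {φ ψ : FormulaX AP} {α : Bool} :
      Judg Γ φ α → Judg Γ ψ α → Judg Γ (.conj φ ψ) α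
  | untl {Γ : Set ℕ} {φ ψ : FormulaX AP} {α : Bool} :
      Judg Γ φ α → Judg Γ ψ α → Judg Γ (.untl φ ψ) α
  | snce {Γ : Set ℕ} {φ ψ : FormulaX AP} {α : Bool} :
      Judg Γ φ α → Judg Γ ψ α → Judg Γ (.snce φ ψ) α
  | exFO {Γ : Set ℕ} {v X : ℕ} {φ : FormulaX AP} :
      X ∈ Γ → Judg Γ φ true → Judg Γ (.exFO v X φ) true
  | allFO {Γ : Set ℕ} {v X : ℕ} {φ : FormulaX AP} :
      X ∈ Γ → Judg Γ φ false → Judg Γ (.allFO v X φ) false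
  | fix {Γ : Set ℕ} {X : ℕ} {cs : List (Constraint AP)} {φ : FormulaX AP} {α : Bool} :
      Judg (insert X Γ) φ α → Judg Γ (.fix X cs φ) α
  | exSO {Γ : Set ℕ} {X : ℕ} {φ : FormulaX AP} {α : Bool} :
      Judg Γ φ α → Judg Γ (.exSO X φ) α
  | allSO {Γ : Set ℕ} {X : ℕ} {φ : FormulaX AP} {α : Bool} :
      Judg Γ φ α → Judg Γ (.allSO X φ) α

/-- If the assignment `D` is below `D'` and below `T`, and `D X` contains `D' X ∩ T`, then a
constraint satisfied under `D'` is satisfied under `D`, provided its target trace lies in `T`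
whenever it is not bound by one of the binders. -/
theorem satBinders_inter {AP : Type} {m : ℕ} {T : Set (Trace AP m)}
    {D D' : ℕ → Set (Trace AP m)} {i X : ℕ} {step : QF AP} {tgt : ℕ}
    (hDD : ∀ Y, D Y ⊆ D' Y) (hDT : ∀ Y, D Y ⊆ T) (hX : D' X ∩ T ⊆ D X)
    (bs : List (ℕ × ℕ)) (P : ℕ → Trace AP m)
    (hP : (∀ p ∈ bs, p.1 ≠ tgt) → P tgt ∈ T)
    (h : SatBinders D' i X P bs step tgt) : SatBinders D i X P bs step tgt := by
  induction bs generalizing P with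
  | nil => exact fun hs => hX ⟨h hs, hP (by simp)⟩
  | cons p rest ih =>
    obtain ⟨v, Y⟩ := p
    intro t ht
    refine ih _ (fun hr => ?_) (h t (hDD Y ht))
    by_cases hv : v = tgt
    · subst hv
      simpa using hDT Y ht
    · rw [Function.update_of_ne (Ne.symm hv)]
      exact hP (by simpa [hv] using hr)

/-- When the target variable is always interpreted in `T`, the set `T` solves every constraint. -/
theorem satBinders_top {AP : Type} {m : ℕ} {T : Set (Trace AP m)}
    {D : ℕ → Set (Trace AP m)} {i X : ℕ} {step : QF AP} {tgt : ℕ}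
    (hDT : ∀ Y, D Y ⊆ T) (hX : T ⊆ D X)
    (bs : List (ℕ × ℕ)) (P : ℕ → Trace AP m)
    (hP : (∀ p ∈ bs, p.1 ≠ tgt) → P tgt ∈ T) : SatBinders D i X P bs step tgt := by
  -- Under the assignment sending every set variable to the set of all traces, every constraint
  -- holds.
  have hall : ∀ (bs : List (ℕ × ℕ)) (P : ℕ → Trace AP m),
      SatBinders (fun _ => Set.univ) i X P bs step tgt := by
    intro bs
    induction bs with
    | nil => exact fun _ _ => trivial
    | cons p rest ih => exact fun _ _ _ => ih _
  exact satBinders_inter (fun _ => Set.subset_univ _) hDT (fun _ ht => hX ht.2) bs P hP (hall bs P)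

theorem target_mem {AP : Type} {m : ℕ} {T : Set (Trace AP m)} {P : ℕ → Trace AP m}
    {c : Constraint AP} (hP : ∀ v ∈ freeTVC c, P v ∈ T)
    (h : ∀ p ∈ c.binders, p.1 ≠ c.target) : P c.target ∈ T :=
  hP _ ⟨Or.inr rfl, fun ⟨p, hp, he⟩ => h p hp he⟩

theorem update_subset {AP : Type} {m : ℕ} {D E : ℕ → Set (Trace AP m)}
    {X : ℕ} {A B : Set (Trace AP m)} (hDE : ∀ Y, D Y ⊆ E Y) (hAB : A ⊆ B) (Y : ℕ) :
    Function.update D X A Y ⊆ Function.update E X B Y := by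
  by_cases h : Y = X
  · subst h
    simpa using hAB
  · simpa [h] using hDE Y

theorem update_subset_const {AP : Type} {m : ℕ} {D : ℕ → Set (Trace AP m)}
    {X : ℕ} {A T : Set (Trace AP m)} (hD : ∀ Y, D Y ⊆ T) (hA : A ⊆ T) (Y : ℕ) :
    Function.update D X A Y ⊆ T := by
  by_cases h : Y = X
  · subst h
    simpa using hA
  · simpa [h] using hD Y

theorem solSet_subset {AP : Type} {m : ℕ} {T : Set (Trace AP m)} {P : ℕ → Trace AP m}
    {D : ℕ → Set (Trace AP m)} {i X : ℕ} {cs : List (Constraint AP)}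
    (hD : ∀ Y, D Y ⊆ T) (hP : ∀ c ∈ cs, ∀ v ∈ freeTVC c, P v ∈ T) :
    solSet T P D i X cs ⊆ T := by
  refine Set.sInter_subset_of_mem ⟨subset_rfl, fun c hc => ?_⟩
  exact satBinders_top (update_subset_const hD subset_rfl) (by simp) _ _ (target_mem (hP c hc))

theorem solSet_mono {AP : Type} {m : ℕ} {T T' : Set (Trace AP m)} {P : ℕ → Trace AP m}
    {D D' : ℕ → Set (Trace AP m)} {i X : ℕ} {cs : List (Constraint AP)}
    (hDD : ∀ Y, D Y ⊆ D' Y) (hD : ∀ Y, D Y ⊆ T)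
    (hP : ∀ c ∈ cs, ∀ v ∈ freeTVC c, P v ∈ T) :
    solSet T P D i X cs ⊆ solSet T' P D' i X cs := by
  refine Set.subset_sInter fun A' hA' => ?_
  have hmem : solSet T P D i X cs ⊆ A' ∩ T := by
    refine Set.sInter_subset_of_mem ⟨Set.inter_subset_right, fun c hc => ?_⟩
    exact satBinders_inter (update_subset hDD Set.inter_subset_left)
      (update_subset_const hD Set.inter_subset_right) (by simp) _ _
      (target_mem (hP c hc)) (hA'.2 c hc)
  exact hmem.trans Set.inter_subset_left

/-- Implication read along the polarity: `p → q` for `⊕` (`true`), `q → p` for `⊖` (`false`). -/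
def Directed : Bool → Prop → Prop → Prop
  | true, p, q => p → q
  | false, p, q => q → p

/-- Soundness of the inference system for open formulas: truth is transported from `(T, D)` to
`(T', D')` for polarity `⊕`, and in the opposite direction for polarity `⊖`. -/
theorem satX_directed {AP : Type} {m : ℕ} {T T' : Set (Trace AP m)} (hT : T ⊆ T')
    {Γ : Set ℕ} {φ : FormulaX AP} {α : Bool} (h : Judg Γ φ α) :
    ∀ (P : ℕ → Trace AP m) (D D' : ℕ → Set (Trace AP m)) (i : ℕ),
      (∀ Y, D Y ⊆ D' Y) → (∀ Y, D Y ⊆ T) → (∀ Y, D' Y ⊆ T') → (∀ v ∈ freeTVX φ, P v ∈ T) →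
      Directed α (SatX T P D i φ) (SatX T' P D' i φ) := by
  have hupd : ∀ (P : ℕ → Trace AP m) (v : ℕ) (t : Trace AP m) (S : Set ℕ), t ∈ T →
      (∀ w ∈ S \ {v}, P w ∈ T) → ∀ w ∈ S, Function.update P v t w ∈ T := by
    intro P v t S ht hS w hw
    by_cases hv : w = v
    · subst hv
      simpa using ht
    · simpa [hv] using hS w ⟨hw, hv⟩
  induction h with
  | atom a v α => intro P D D' i _ _ _ _; cases α <;> exact id
  | negPlus _ ih =>
    intro P D D' i h1 h2 h3 h4 hn hs
    exact hn (ih P D D' i h1 h2 h3 h4 hs)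
  | negMinus _ ih =>
    intro P D D' i h1 h2 h3 h4 hn hs
    exact hn (ih P D D' i h1 h2 h3 h4 hs)
  | @nxt _ _ α _ ih =>
    intro P D D' i h1 h2 h3 h4
    have ih := ih P D D' (i + 1) h1 h2 h3 h4
    cases α <;> exact fun hs => ⟨hs.1, ih hs.2⟩
  | @prv _ _ α _ ih =>
    intro P D D' i h1 h2 h3 h4
    have ih := ih P D D' (i - 1) h1 h2 h3 h4
    cases α <;> exact fun hs => ⟨hs.1, ih hs.2⟩
  | @conj _ _ _ α _ _ ih₁ ih₂ =>
    intro P D D' i h1 h2 h3 h4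
    have ih₁ := ih₁ P D D' i h1 h2 h3 fun v hv => h4 v (Or.inl hv)
    have ih₂ := ih₂ P D D' i h1 h2 h3 fun v hv => h4 v (Or.inr hv)
    cases α <;> exact fun hs => ⟨ih₁ hs.1, ih₂ hs.2⟩
  | @untl _ _ _ α _ _ ih₁ ih₂ =>
    intro P D D' i h1 h2 h3 h4
    have ih₁ := fun k => ih₁ P D D' k h1 h2 h3 fun v hv => h4 v (Or.inl hv)
    have ih₂ := fun k => ih₂ P D D' k h1 h2 h3 fun v hv => h4 v (Or.inr hv)
    cases α <;> exact fun ⟨j, hij, hjm, hj, hk⟩ =>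
      ⟨j, hij, hjm, ih₂ j hj, fun k hk₁ hk₂ => ih₁ k (hk k hk₁ hk₂)⟩
  | @snce _ _ _ α _ _ ih₁ ih₂ =>
    intro P D D' i h1 h2 h3 h4
    have ih₁ := fun k => ih₁ P D D' k h1 h2 h3 fun v hv => h4 v (Or.inl hv)
    have ih₂ := fun k => ih₂ P D D' k h1 h2 h3 fun v hv => h4 v (Or.inr hv)
    cases α <;> exact fun ⟨j, hji, hj, hk⟩ =>
      ⟨j, hji, ih₂ j hj, fun k hk₁ hk₂ => ih₁ k (hk k hk₁ hk₂)⟩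
  | exFO _ _ ih =>
    rintro P D D' i h1 h2 h3 h4 ⟨t, ht, hs⟩
    exact ⟨t, h1 _ ht, ih _ D D' i h1 h2 h3 (hupd _ _ _ _ (h2 _ ht) h4) hs⟩
  | allFO _ _ ih =>
    intro P D D' i h1 h2 h3 h4 hs t ht
    exact ih _ D D' i h1 h2 h3 (hupd _ _ _ _ (h2 _ ht) h4) (hs t (h1 _ ht))
  | fix _ ih =>
    intro P D D' i h1 h2 h3 h4
    have hc := fun c hc v hv => h4 v (Or.inr ⟨c, hc, hv⟩)
    exact ih P _ _ i (update_subset h1 (solSet_mono h1 h2 hc))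
      (update_subset_const h2 (solSet_subset h2 hc))
      (update_subset_const h3 (solSet_subset h3 fun c hm v hv => hT (hc c hm v hv)))
      fun v hv => h4 v (Or.inl hv)
  | @exSO _ X _ α _ ih =>
    intro P D D' i h1 h2 h3 h4
    have ih := fun A A' (hAA : A ⊆ A') (hA : A ⊆ T) (hA' : A' ⊆ T') =>
      ih P (Function.update D X A) (Function.update D' X A') i (update_subset h1 hAA)
        (update_subset_const h2 hA) (update_subset_const h3 hA') h4
    cases α
    · exact fun ⟨A', hA', hs⟩ => ⟨A' ∩ T, Set.inter_subset_right,
        ih _ A' Set.inter_subset_left Set.inter_subset_right hA' hs⟩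
    · exact fun ⟨A, hA, hs⟩ => ⟨A, hA.trans hT, ih A A subset_rfl hA (hA.trans hT) hs⟩
  | @allSO _ X _ α _ ih =>
    intro P D D' i h1 h2 h3 h4
    have ih := fun A A' (hAA : A ⊆ A') (hA : A ⊆ T) (hA' : A' ⊆ T') =>
      ih P (Function.update D X A) (Function.update D' X A') i (update_subset h1 hAA)
        (update_subset_const h2 hA) (update_subset_const h3 hA') h4
    cases α
    · exact fun hs A hA => ih A A subset_rfl hA (hA.trans hT) (hs A (hA.trans hT))
    · exact fun hs A' hA' => ih _ A' Set.inter_subset_left Set.inter_subset_right hA'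
        (hs (A' ∩ T) Set.inter_subset_right)

/-- soundness of the monotonicity inference system, positive case:
if `{sys} ⊢ φ : ⊕` is derivable for a closed formula `φ` of the extended logic,
then `φ` is ⊕-monotone. -/
theorem inference_sound_plus {AP : Type} [Fintype AP]
    (φ : FormulaX AP) (hclosed : ClosedX φ)
    (h : Judg ({sysVar} : Set ℕ) φ true) :
    PlusMonotoneX φ := by
  intro m T T' hT hs
  refine satX_directed hT h _ _ _ 0 (fun Y => ?_) (fun Y => ?_) (fun Y => ?_) ?_ hs
  · split_ifs <;> simp [hT]
  · split_ifs <;> simp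
  · split_ifs <;> simp
  · simp [hclosed.1]

end Hyper2LTLf
end

section
/- Let AP ⊇ {a,b,c} and, for trace variables π, π', write π ≠ π' for the formula F(¬(a_π↔a_{π'}) ∨ ¬(b_π↔b_{π'}) ∨ ¬(c_π↔c_{π'})). Let φ := ∀π∈sys. (∃π'∈sys. (π ≠ π' ∧ G(a_π ↔ a_{π'}))) ∨ (∃π''∈sys. F b_{π''}). For any trace length m ≥ 1, let t_{ac}, t_a, t_c, t_b be the constant traces with value {a,c}, {a}, {c}, {b} respectively, and set 𝕋 := {t_{ac}, t_a}, 𝕋' := 𝕋 ∪ {t_c}, 𝕋'' := 𝕋' ∪ {t_b}. Then 𝕋 ⊨ φ, 𝕋' ⊭ φ, and 𝕋'' ⊨ φ; consequently φ is neither ⊕-monotone nor ⊖-monotone. -/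
/-!
Unfolding the semantics (`models_phiEx`), `φ` says that each trace has a distinct partner with the
same `a`-projection, unless some trace contains `b`. In `{t_ac, t_a}` the two traces are partners
of each other, separated by `c`. In `{t_ac, t_a, t_c}` the trace `t_c` is the only one without `a`,
hence has no partner, and `b` does not occur. Adding `t_b` makes the second disjunct true.
The two inclusions at length `1` refute both kinds of monotonicity.
-/

namespace Hyper2LTLf

/-- Syntax of Hyper²LTL_f (without the `fix` construct).
Trace variables and set variables are represented by natural numbers. -/
inductive Formula (AP : Type) : Type
  | atom  : AP → ℕ → Formula AP
  | neg   : Formula AP → Formula AP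
  | conj  : Formula AP → Formula AP → Formula AP
  | nxt   : Formula AP → Formula AP
  | prv   : Formula AP → Formula AP
  | untl  : Formula AP → Formula AP → Formula AP
  | snce  : Formula AP → Formula AP → Formula AP
  | exFO  : ℕ → ℕ → Formula AP → Formula AP   -- ∃ π ∈ X. φ   (trace var, set var)
  | allFO : ℕ → ℕ → Formula AP → Formula AP   -- ∀ π ∈ X. φ
  | exSO  : ℕ → Formula AP → Formula AP        -- ∃ X. φ
  | allSO : ℕ → Formula AP → Formula AP        -- ∀ X. φ

variable {AP : Type}

/-- Finite-trace satisfaction `Π, Δ, i ⊨_𝕋 φ`. -/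
def Sat {m : ℕ} (T : Set (Trace AP m)) :
    (ℕ → Trace AP m) → (ℕ → Set (Trace AP m)) → ℕ → Formula AP → Prop
  | P, _, i, .atom a v => ∃ h : i < m, a ∈ P v ⟨i, h⟩
  | P, D, i, .neg φ => ¬ Sat T P D i φ
  | P, D, i, .conj φ ψ => Sat T P D i φ ∧ Sat T P D i ψ
  | P, D, i, .nxt φ => i + 1 < m ∧ Sat T P D (i + 1) φ
  | P, D, i, .prv φ => 0 < i ∧ Sat T P D (i - 1) φ
  | P, D, i, .untl φ ψ =>
      ∃ j, i ≤ j ∧ j < m ∧ Sat T P D j ψ ∧ ∀ k, i ≤ k → k < j → Sat T P D k φ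
  | P, D, i, .snce φ ψ =>
      ∃ j, j ≤ i ∧ Sat T P D j ψ ∧ ∀ k, j < k → k ≤ i → Sat T P D k φ
  | P, D, i, .exFO v X φ => ∃ t ∈ D X, Sat T (Function.update P v t) D i φ
  | P, D, i, .allFO v X φ => ∀ t ∈ D X, Sat T (Function.update P v t) D i φ
  | P, D, i, .exSO X φ => ∃ A : Set (Trace AP m), A ⊆ T ∧ Sat T P (Function.update D X A) i φ
  | P, D, i, .allSO X φ => ∀ A : Set (Trace AP m), A ⊆ T → Sat T P (Function.update D X A) i φ

/-- Top-level satisfaction: `𝕋 ⊨ φ` iff `∅, [sys ↦ 𝕋], 0 ⊨_𝕋 φ`. -/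
def Models {m : ℕ} (T : Set (Trace AP m)) (φ : Formula AP) : Prop :=
  Sat T (fun _ _ => (∅ : Set AP)) (fun X => if X = sysVar then T else ∅) 0 φ

/-- Free (first-order) trace variables. -/
def freeTV : Formula AP → Set ℕ
  | .atom _ v => {v}
  | .neg φ => freeTV φ
  | .nxt φ => freeTV φ
  | .prv φ => freeTV φ
  | .conj φ ψ => freeTV φ ∪ freeTV ψ
  | .untl φ ψ => freeTV φ ∪ freeTV ψ
  | .snce φ ψ => freeTV φ ∪ freeTV ψ
  | .exFO v _ φ => freeTV φ \ {v}
  | .allFO v _ φ => freeTV φ \ {v}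
  | .exSO _ φ => freeTV φ
  | .allSO _ φ => freeTV φ

/-- Free (second-order) set variables. -/
def freeSV : Formula AP → Set ℕ
  | .atom _ _ => ∅
  | .neg φ => freeSV φ
  | .nxt φ => freeSV φ
  | .prv φ => freeSV φ
  | .conj φ ψ => freeSV φ ∪ freeSV ψ
  | .untl φ ψ => freeSV φ ∪ freeSV ψ
  | .snce φ ψ => freeSV φ ∪ freeSV ψ
  | .exFO _ X φ => insert X (freeSV φ)
  | .allFO _ X φ => insert X (freeSV φ)
  | .exSO X φ => freeSV φ \ {X}
  | .allSO X φ => freeSV φ \ {X}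

/-- A formula is closed if it has no free trace variables and its only
(possibly) free set variable is `sys`. -/
def Closed (φ : Formula AP) : Prop := freeTV φ = ∅ ∧ freeSV φ ⊆ {sysVar}

/-- `⊕`-monotonicity. -/
def PlusMonotone (φ : Formula AP) : Prop :=
  ∀ (m : ℕ) (T T' : Set (Trace AP m)), T ⊆ T' → Models T φ → Models T' φ

/-- `⊖`-monotonicity. -/
def MinusMonotone (φ : Formula AP) : Prop :=
  ∀ (m : ℕ) (T T' : Set (Trace AP m)), T ⊆ T' → ¬ Models T φ → ¬ Models T' φ

/-- Monitorability in the sequential model at trace length `m`. -/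
def MonitorableAt (φ : Formula AP) (m : ℕ) : Prop :=
  ∀ U : Set (Trace AP m), ∃ V : Set (Trace AP m),
    (∀ W : Set (Trace AP m), Models (U ∪ V ∪ W) φ) ∨
    (∀ W : Set (Trace AP m), ¬ Models (U ∪ V ∪ W) φ)

section Example
variable {AP : Type} (a b c : AP)

/-- Derived disjunction `φ ∨ ψ := ¬(¬φ ∧ ¬ψ)`. -/
def orF (φ ψ : Formula AP) : Formula AP := .neg (.conj (.neg φ) (.neg ψ))

/-- Derived implication `φ → ψ := ¬(φ ∧ ¬ψ)`. -/
def implF (φ ψ : Formula AP) : Formula AP := .neg (.conj φ (.neg ψ))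

/-- Derived equivalence. -/
def iffF (φ ψ : Formula AP) : Formula AP := .conj (implF φ ψ) (implF ψ φ)

/-- A formula that is true in every context. -/
def ttF : Formula AP := .neg (.conj (.atom a 0) (.neg (.atom a 0)))

/-- Eventually: `F φ := true U φ`. -/
def evF (φ : Formula AP) : Formula AP := .untl (ttF a) φ

/-- Globally: `G φ := ¬ F ¬ φ`. -/
def glF (φ : Formula AP) : Formula AP := .neg (evF a (.neg φ))

/-- `π ≠ π'`, expressed as
`F(¬(a_π↔a_{π'}) ∨ ¬(b_π↔b_{π'}) ∨ ¬(c_π↔c_{π'}))`. -/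
def neqF (v v' : ℕ) : Formula AP :=
  evF a (orF (orF (.neg (iffF (.atom a v) (.atom a v')))
                  (.neg (iffF (.atom b v) (.atom b v'))))
             (.neg (iffF (.atom c v) (.atom c v'))))

/-- The formula
`φ := ∀π∈sys. (∃π'∈sys. (π ≠ π' ∧ G(a_π ↔ a_{π'}))) ∨ (∃π''∈sys. F b_{π''})`,
with `π, π', π''` represented by the trace variables `0, 1, 2`. -/
def phiEx : Formula AP :=
  .allFO 0 sysVar
    (orF (.exFO 1 sysVar (.conj (neqF a b c 0 1) (glF a (iffF (.atom a 0) (.atom a 1)))))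
         (.exFO 2 sysVar (evF a (.atom b 2))))

/-- The constant trace with letter `{a,c}`. -/
def tac (m : ℕ) : Trace AP m := fun _ => {a, c}
/-- The constant trace with letter `{a}`. -/
def ta (m : ℕ) : Trace AP m := fun _ => {a}
/-- The constant trace with letter `{c}`. -/
def tc (m : ℕ) : Trace AP m := fun _ => {c}
/-- The constant trace with letter `{b}`. -/
def tb (m : ℕ) : Trace AP m := fun _ => {b}

end Example

/-- The semantics of `phiEx` unfolded: every `t ∈ T` either has an `a`-equivalent partner in `T`
that differs from it on `a`, `b` or `c` at some position, or some trace of `T` contains `b`. -/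
lemma models_phiEx {AP : Type} (a b c : AP) {m : ℕ} (T : Set (Trace AP m)) :
    Models T (phiEx a b c) ↔ ∀ t ∈ T,
      (∃ t' ∈ T, (∃ j, ¬ ((a ∈ t j ↔ a ∈ t' j) ∧ (b ∈ t j ↔ b ∈ t' j) ∧ (c ∈ t j ↔ c ∈ t' j))) ∧
        ∀ j, (a ∈ t j ↔ a ∈ t' j)) ∨
      ∃ t' ∈ T, ∃ j, b ∈ t' j := by
  have hev : ∀ (P : ℕ → Trace AP m) (D : ℕ → Set (Trace AP m)) (φ : Formula AP),
      Sat T P D 0 (evF a φ) ↔ ∃ j : Fin m, Sat T P D j φ := by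
    intro P D φ
    simp only [evF, ttF, Sat, and_not_self, not_false_eq_true, implies_true, and_true]
    exact ⟨fun ⟨j, _, h, hs⟩ => ⟨⟨j, h⟩, hs⟩, fun ⟨j, hs⟩ => ⟨j, Nat.zero_le _, j.2, hs⟩⟩
  have hor : ∀ (P : ℕ → Trace AP m) (D : ℕ → Set (Trace AP m)) (i : ℕ) (φ ψ : Formula AP),
      Sat T P D i (orF φ ψ) ↔ (Sat T P D i φ ∨ Sat T P D i ψ) := by
    intro P D i φ ψ
    simp only [orF, Sat]
    tauto
  have hiff : ∀ (P : ℕ → Trace AP m) (D : ℕ → Set (Trace AP m)) (i : ℕ) (φ ψ : Formula AP),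
      Sat T P D i (iffF φ ψ) ↔ (Sat T P D i φ ↔ Sat T P D i ψ) := by
    intro P D i φ ψ
    simp only [iffF, implF, Sat]
    tauto
  have hatom : ∀ (P : ℕ → Trace AP m) (D : ℕ → Set (Trace AP m)) (j : Fin m) (x : AP) (v : ℕ),
      Sat T P D j (.atom x v) ↔ x ∈ P v j := by
    intro P D j x v
    simp [Sat]
  have hneg : ∀ (P : ℕ → Trace AP m) (D : ℕ → Set (Trace AP m)) (i : ℕ) (φ : Formula AP),
      Sat T P D i (.neg φ) ↔ ¬ Sat T P D i φ := by
    intro P D i φ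
    simp only [Sat]
  have hconj : ∀ (P : ℕ → Trace AP m) (D : ℕ → Set (Trace AP m)) (i : ℕ) (φ ψ : Formula AP),
      Sat T P D i (.conj φ ψ) ↔ (Sat T P D i φ ∧ Sat T P D i ψ) := by
    intro P D i φ ψ
    simp only [Sat]
  have hex : ∀ (P : ℕ → Trace AP m) (D : ℕ → Set (Trace AP m)) (i v X : ℕ) (φ : Formula AP),
      Sat T P D i (.exFO v X φ) ↔ ∃ t ∈ D X, Sat T (Function.update P v t) D i φ := by
    intro P D i v X φ
    simp only [Sat]
  have hall : ∀ (P : ℕ → Trace AP m) (D : ℕ → Set (Trace AP m)) (i v X : ℕ) (φ : Formula AP),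
      Sat T P D i (.allFO v X φ) ↔ ∀ t ∈ D X, Sat T (Function.update P v t) D i φ := by
    intro P D i v X φ
    simp only [Sat]
  simp only [Models, phiEx, neqF, glF, hall, hex, hor, hconj, hneg, hev, hiff, hatom, if_true,
    Function.update_self, ne_eq, zero_ne_one, not_false_eq_true, Function.update_of_ne,
    not_exists, not_not, not_and_or, or_assoc]

/-- the formula `φ` above satisfies `𝕋 ⊨ φ`, `𝕋' ⊭ φ`, `𝕋'' ⊨ φ`
for `𝕋 = {t_{ac}, t_a}`, `𝕋' = 𝕋 ∪ {t_c}`, `𝕋'' = 𝕋' ∪ {t_b}` (any trace length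
`m ≥ 1`); consequently `φ` is neither ⊕-monotone nor ⊖-monotone. -/
theorem phiEx_not_monotone {AP : Type} [Fintype AP] (a b c : AP)
    (hab : a ≠ b) (hac : a ≠ c) (hbc : b ≠ c) :
    (∀ m : ℕ, 1 ≤ m →
      Models ({tac a c m, ta a m} : Set (Trace AP m)) (phiEx a b c) ∧
      ¬ Models ({tac a c m, ta a m, tc c m} : Set (Trace AP m)) (phiEx a b c) ∧
      Models ({tac a c m, ta a m, tc c m, tb b m} : Set (Trace AP m)) (phiEx a b c)) ∧
    ¬ PlusMonotone (phiEx a b c) ∧ ¬ MinusMonotone (phiEx a b c) := by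
  have key : ∀ m : ℕ, 1 ≤ m →
      Models ({tac a c m, ta a m} : Set (Trace AP m)) (phiEx a b c) ∧
      ¬ Models ({tac a c m, ta a m, tc c m} : Set (Trace AP m)) (phiEx a b c) ∧
      Models ({tac a c m, ta a m, tc c m, tb b m} : Set (Trace AP m)) (phiEx a b c) := by
    intro m hm
    have j₀ : Fin m := ⟨0, hm⟩
    simp only [models_phiEx]
    refine ⟨?_, ?_, ?_⟩
    · rintro t (rfl | rfl)
      · exact Or.inl ⟨ta a m, by simp, ⟨j₀, by simp [tac, ta, hac.symm]⟩, by simp [tac, ta]⟩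
      · exact Or.inl ⟨tac a c m, by simp, ⟨j₀, by simp [tac, ta, hac.symm]⟩, by simp [tac, ta]⟩
    · intro h
      rcases h (tc c m) (by simp) with ⟨t', ht', ⟨j, hj⟩, hG⟩ | ⟨t', ht', j, hj⟩
      · rcases ht' with rfl | rfl | rfl
        · simpa [tc, tac, hac] using hG j
        · simpa [tc, ta, hac] using hG j
        · exact hj ⟨Iff.rfl, Iff.rfl, Iff.rfl⟩
      · rcases ht' with rfl | rfl | rfl <;> simp [tac, ta, tc, hab.symm, hbc] at hj
    · intro t _
      exact Or.inr ⟨tb b m, by simp, j₀, by simp [tb]⟩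
  obtain ⟨h₁, h₂, h₃⟩ := key 1 le_rfl
  refine ⟨key, fun h => h₂ (h 1 _ _ ?_ h₁), fun h => h 1 _ _ ?_ h₂ h₃⟩
  · rintro t (rfl | rfl) <;> simp
  · rintro t (rfl | rfl | rfl) <;> simp

end Hyper2LTLf
end

section
/- Monotonicity of the fixpoint solution under growing assignments (correctness of fixpoint hashing): let ξ₁,…,ξ_k be fixpoint constraints for set variable X, let 𝕋 ⊆ 𝕋' be sets of traces of length m, Π a trace assignment, i < m, and Δ, Δ' set assignments with Δ(Y) ⊆ 𝕋 and Δ'(Y) ⊆ 𝕋' for every set variable Y, such that Δ(Y) ⊆ Δ'(Y) for every set variable Y occurring in the constraints other than X. Then sol(Π,Δ,i,X,ξ₁,…,ξ_k) (computed over 𝕋) is a subset of sol(Π,Δ',i,X,ξ₁,…,ξ_k) (computed over 𝕋'). -/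
/-!
Let `A'` be any solution of the constraints over `𝕋'` and `Δ'`. Then `A' ∩ 𝕋` is a solution over
`𝕋` and `Δ`: every instantiation of the binders by traces from `Δ[X ↦ A' ∩ 𝕋]` is also one from
`Δ'[X ↦ A']`, so the target trace lies in `A'`, and it lies in `𝕋` because all traces involved do
(`SatBinders.inter`). Hence the least solution over `𝕋` is contained in every such `A'`, and
therefore in their intersection.
-/

namespace Hyper2LTLf

variable {AP : Type}

/-- The traces generated by one constraint:
`{ Π'(π) : Π' = Π[π₁↦t₁,…,πₙ↦tₙ], t_l ∈ D(X_l), Π',D,i ⊨ φ_step }`. -/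
def genSet {m : ℕ} (i : ℕ) (D : ℕ → Set (Trace AP m)) :
    (ℕ → Trace AP m) → List (ℕ × ℕ) → QF AP → ℕ → Set (Trace AP m)
  | P, [], step, tgt => {t | t = P tgt ∧ SatQF P i step}
  | P, (v, Y) :: rest, step, tgt =>
      ⋃ t ∈ D Y, genSet i D (Function.update P v t) rest step tgt

/-- The operator `f` associated with the constraints `cs` of the fix-variable `X`
(in the context `Π`, `Δ`, `i`):
`f(A) = A ∪ ⋃_j { Π'(π) : … }` where `X` is interpreted as `A`. -/
def opF {m : ℕ} (P : ℕ → Trace AP m) (D : ℕ → Set (Trace AP m)) (i : ℕ) (X : ℕ)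
    (cs : List (Constraint AP)) (A : Set (Trace AP m)) : Set (Trace AP m) :=
  A ∪ ⋃ c ∈ cs, genSet i (Function.update D X A) P c.binders c.step c.target

/-- Satisfaction of a constraint passes from `D'[X ↦ A]` to `D[X ↦ A ∩ T]`. The hypothesis
`hP` keeps the target trace inside `T`; it is preserved when a binder is instantiated. -/
theorem SatBinders.inter {m : ℕ} {T A : Set (Trace AP m)} {D D' : ℕ → Set (Trace AP m)}
    {i X : ℕ} (hD : ∀ Y, D Y ⊆ T) (step : QF AP) (tgt : ℕ) (bs : List (ℕ × ℕ)) :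
    ∀ P : ℕ → Trace AP m, (∀ v, P v ∈ T) →
      (∀ p ∈ bs, p.2 ≠ X → D p.2 ⊆ D' p.2) →
      SatBinders (Function.update D' X A) i X P bs step tgt →
      SatBinders (Function.update D X (A ∩ T)) i X P bs step tgt := by
  induction bs with
  | nil =>
    intro P hP _ h hs
    have h' := h hs
    rw [Function.update_self] at h' ⊢
    exact ⟨h', hP tgt⟩
  | cons b rest ih =>
    obtain ⟨v, Y⟩ := b
    intro P hP hgrow h t ht
    have key : t ∈ T ∧ t ∈ Function.update D' X A Y := by
      by_cases hY : Y = X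
      · subst hY
        rw [Function.update_self] at ht ⊢
        exact ⟨ht.2, ht.1⟩
      · rw [Function.update_of_ne hY] at ht ⊢
        exact ⟨hD Y ht, hgrow (v, Y) List.mem_cons_self hY ht⟩
    refine ih _ (fun w => ?_) (fun p hp => hgrow p (List.mem_cons_of_mem _ hp)) (h t key.2)
    by_cases hw : w = v
    · subst hw
      rw [Function.update_self]
      exact key.1
    · rw [Function.update_of_ne hw]
      exact hP w

/-- the fixpoint solution grows monotonically when the trace set
and the second-order assignment grow (correctness of fixpoint hashing): if
`𝕋 ⊆ 𝕋'` and `Δ(Y) ⊆ Δ'(Y)` for every set variable `Y ≠ X` occurring in the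
constraints, then `sol(Π,Δ,i,X,ξ₁,…,ξ_k) ⊆ sol(Π,Δ',i,X,ξ₁,…,ξ_k)`. -/
theorem solSet_monotone {AP : Type} [Fintype AP] {m : ℕ}
    (T T' : Set (Trace AP m)) (P : ℕ → Trace AP m)
    (D D' : ℕ → Set (Trace AP m)) (i : ℕ) (X : ℕ) (cs : List (Constraint AP))
    (hTT' : T ⊆ T') (hD : ∀ Y, D Y ⊆ T) (hD' : ∀ Y, D' Y ⊆ T')
    (hP : ∀ v, P v ∈ T) (hi : i < m)
    (hgrow : ∀ Y, Y ≠ X → (∃ c ∈ cs, ∃ p ∈ c.binders, p.2 = Y) → D Y ⊆ D' Y) :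
    solSet T P D i X cs ⊆ solSet T' P D' i X cs := by
  intro t ht A' hA'
  have hmem := ht (A' ∩ T) ⟨Set.inter_subset_right, fun c hc =>
    SatBinders.inter hD c.step c.target c.binders P hP
      (fun p hp hne => hgrow p.2 hne ⟨c, hc, p, hp, rfl⟩) (hA'.2 c hc)⟩
  exact hmem.1

end Hyper2LTLf
end
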